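/- arXiv:2202.00084 — 10 statements merged into one kernel-verified Lean document; each statement's English description precedes it below -/
import Mathlib

section
/- Let X be a regular band (z*x*z*y*z = z*x*y*z for all x, y, z) and let x, y ∈ X. (a) If x*y = y*x then x*y is the greatest lower bound of x and y with respect to the natural partial order ≤: x*y ≤ x, x*y ≤ y, and every z with z ≤ x and z ≤ y satisfies z ≤ x*y. (b) Conversely, if there exists z ∈ X with z ≤ x, z ≤ y and z D x*y, then x*y = z = y*x. -/
/-- The natural partial order on a band: `x ≤ y` iff `x = x*y` and `x = y*x`. -/
def bandLe {X : Type*} [Mul X] (x y : X) : Prop := x = x * y ∧ x = y * x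

/-- Green's `D`-relation on a band. -/
def bandD {X : Type*} [Mul X] (x y : X) : Prop := x = x * y * x ∧ y = y * x * y

/-!
If `z` lies below `x` and `y`, it is absorbed by `x * y` on both sides, that is, `z ≤ x * y`.
Comparable `D`-related elements coincide, so `z D x * y` forces `z = x * y`. This element then
absorbs `y` on the left and `x` on the right, whence
`x * y = y * (x * y) * x = (y * x) * (y * x) = y * x`.
-/

section Semigroup

variable {X : Type*} [Semigroup X] {x y z : X}

theorem mul_bandLe_left (hx : IsIdempotentElem x) (hxy : Commute x y) : bandLe (x * y) x := by
  constructor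
  · rw [hxy.eq, mul_assoc, hx.eq]
  · rw [← mul_assoc, hx.eq]

theorem mul_bandLe_right_s6 (hy : IsIdempotentElem y) (hxy : Commute x y) : bandLe (x * y) y :=
  hxy.eq ▸ mul_bandLe_left hy hxy.symm

theorem bandLe_mul (hx : bandLe z x) (hy : bandLe z y) : bandLe z (x * y) := by
  constructor
  · rw [← mul_assoc, ← hx.1, ← hy.1]
  · rw [mul_assoc, ← hy.2, ← hx.2]

theorem eq_of_bandLe_of_bandD (hle : bandLe x y) (hD : bandD x y) : x = y :=
  calc
    x = x * y := hle.1
    _ = y * x * y := by rw [← hle.2]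
    _ = y := hD.2.symm

theorem commute_of_mul_bandLe (hyx : IsIdempotentElem (y * x))
    (hx : bandLe (x * y) x) (hy : bandLe (x * y) y) : Commute x y :=
  calc
    x * y = x * y * x := hx.1
    _ = y * (x * y) * x := by rw [← hy.2]
    _ = y * x * (y * x) := by simp only [mul_assoc]
    _ = y * x := hyx.eq

theorem regular_band_commuting_meet_general
    (hx : IsIdempotentElem x) (hy : IsIdempotentElem y) (hyx : IsIdempotentElem (y * x)) :
    (x * y = y * x →
      bandLe (x * y) x ∧ bandLe (x * y) y ∧
      ∀ z : X, bandLe z x → bandLe z y → bandLe z (x * y)) ∧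
    (∀ z : X, bandLe z x → bandLe z y → bandD z (x * y) → x * y = z ∧ z = y * x) := by
  constructor
  · intro hxy
    exact ⟨mul_bandLe_left hx hxy, mul_bandLe_right_s6 hy hxy, fun _ => bandLe_mul⟩
  · intro z hzx hzy hD
    obtain rfl : z = x * y := eq_of_bandLe_of_bandD (bandLe_mul hzx hzy) hD
    exact ⟨rfl, commute_of_mul_bandLe hyx hzx hzy⟩

end Semigroup

/-- In a regular band: (a) if `x` and `y` commute then `x*y` is
the greatest lower bound of `x` and `y` for the natural partial order;
(b) conversely, if some `z ≤ x`, `z ≤ y` is `D`-related to `x*y` then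
`x*y = z = y*x`. -/
theorem regular_band_commuting_meet {X : Type*} [Semigroup X]
    (idem : ∀ x : X, x * x = x)
    (reg : ∀ x y z : X, z * x * z * y * z = z * x * y * z) :
    ∀ x y : X,
      (x * y = y * x →
        bandLe (x * y) x ∧ bandLe (x * y) y ∧
        ∀ z : X, bandLe z x → bandLe z y → bandLe z (x * y)) ∧
      (∀ z : X, bandLe z x → bandLe z y → bandD z (x * y) → x * y = z ∧ z = y * x) :=
  fun x y => regular_band_commuting_meet_general (idem x) (idem y) (idem (y * x))
end

section
/- Let Y be a right regular band and F a presheaf of sets on the poset (Y, ≤) given by the natural partial order, i.e. a functor (Y, ≤)^op → Set, with restriction maps written t ↦ t|_x for x ≤ y and t ∈ F(y). Note that x*y ≤ y for all x, y by right regularity. On the set E = {(y, t) : y ∈ Y, t ∈ F(y)} define (x, s)*(y, t) = (x*y, t|_{x*y}). Then: (a) this operation is associative and idempotent and makes E a right regular band; (b) the first projection E → Y, (y, t) ↦ y, is a band homomorphism; (c) (x, s) D (y, t) in E if and only if x D y in Y; in particular the induced map E/D → Y/D is injective, and its image is a downward-closed subset of Y/D (consisting of the classes [y] with F(y) nonempty).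 -/
/-- The preorder `x ≼ y` iff `x = x*y*x` on a band. -/
def bandPreceq {X : Type*} [Mul X] (x y : X) : Prop := x = x * y * x

/-- A presheaf of sets on the poset underlying a band (with its natural
partial order `bandLe`): a family of sets with contravariant functorial
restriction maps. -/
structure BandPresheaf (Y : Type*) [Mul Y] where
  obj : Y → Type*
  res : ∀ {x y : Y}, bandLe x y → obj y → obj x
  res_refl : ∀ {x : Y} (h : bandLe x x) (t : obj x), res h t = t
  res_comp : ∀ {x y z : Y} (hxy : bandLe x y) (hyz : bandLe y z) (hxz : bandLe x z)
      (t : obj z), res hxy (res hyz t) = res hxz t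

/-- In a right regular band, `x*y ≤ y`. -/
lemma mul_bandLe_right {Y : Type*} [Semigroup Y] (idem : ∀ x : Y, x * x = x)
    (rreg : ∀ x y : Y, x * y * x = y * x) (x y : Y) : bandLe (x * y) y := by
  constructor
  · rw [mul_assoc, idem]
  · rw [← mul_assoc, rreg]

/-- The multiplication `(x, s)*(y, t) = (x*y, t|_{x*y})` on the set of elements
of a presheaf on a right regular band. -/
def elMul {Y : Type*} [Semigroup Y] (idem : ∀ x : Y, x * x = x)
    (rreg : ∀ x y : Y, x * y * x = y * x) (F : BandPresheaf Y)
    (a b : (y : Y) × F.obj y) : (y : Y) × F.obj y :=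
  ⟨a.1 * b.1, F.res (mul_bandLe_right idem rreg a.1 b.1) b.2⟩

/-!
The product `a * b` is the restriction of `b` along `a.1 * b.1 ≤ b.1`. Functoriality makes a
restriction of `b` depend only on its base point, so every identity between restrictions of one
element of `E` reduces to an identity in `Y`. For the image of `E/D → Y/D`, if `x = x * y * x` then
`y * x * y` lies below `y` and is `D`-related to `x`, so elements of `F(y)` restrict to it.
-/

lemma bandLe.trans {X : Type*} [Semigroup X] {x y z : X} (hxy : bandLe x y) (hyz : bandLe y z) :
    bandLe x z := by
  constructor
  · calc
      x = x * (y * z) := by rw [← hyz.1, ← hxy.1]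
      _ = x * z := by rw [← mul_assoc, ← hxy.1]
  · calc
      x = (z * y) * x := by rw [← hyz.2, ← hxy.2]
      _ = z * x := by rw [mul_assoc, ← hxy.2]

namespace bandPreceq

variable {X : Type*} [Semigroup X] {x y : X}

lemma bandD_mul_mul (h : bandPreceq x y) : bandD (y * x * y) x := by
  have hx : x * y * x = x := h.symm
  constructor
  · calc
      y * x * y = y * (x * y * x) * y := by rw [hx]
      _ = y * (x * y * x * y * x) * y := by rw [hx, hx]
      _ = y * x * y * x * (y * x * y) := by simp only [mul_assoc]
  · calc
      x = x * y * x * y * x := by rw [hx, hx]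
      _ = x * (y * x * y) * x := by simp only [mul_assoc]

lemma exists_bandLe_bandD (h : bandPreceq x y) (hy : IsIdempotentElem y) :
    ∃ x', bandLe x' y ∧ bandD x' x :=
  ⟨y * x * y, ⟨by rw [mul_assoc _ y y, hy.eq], by simp only [← mul_assoc, hy.eq]⟩, h.bandD_mul_mul⟩

end bandPreceq

namespace BandPresheaf

section Mul

variable {Y : Type*} [Mul Y] (F : BandPresheaf Y) {x x' : Y} (b : (y : Y) × F.obj y)

/-- The restriction of an element `(y, t)` of a presheaf along `x ≤ y`, viewed again as an element
`(x, t|_x)`, so that restrictions to different base points can be compared by equality. -/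
def restrict (h : bandLe x b.1) : (y : Y) × F.obj y :=
  ⟨x, F.res h b.2⟩

lemma restrict_congr (h : bandLe x b.1) (h' : bandLe x' b.1) (e : x = x') :
    F.restrict b h = F.restrict b h' := by
  subst e
  rfl

lemma restrict_eq_self_iff (h : bandLe x b.1) : F.restrict b h = b ↔ x = b.1 := by
  refine ⟨congrArg Sigma.fst, ?_⟩
  rintro rfl
  exact Sigma.ext rfl (heq_of_eq (F.res_refl h b.2))

end Mul

lemma restrict_restrict {Y : Type*} [Semigroup Y] (F : BandPresheaf Y) {x y : Y}
    (b : (y : Y) × F.obj y) (hxy : bandLe x y) (hyb : bandLe y b.1) :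
    F.restrict (F.restrict b hyb) hxy = F.restrict b (hxy.trans hyb) :=
  Sigma.ext rfl (heq_of_eq (F.res_comp hxy hyb _ b.2))

end BandPresheaf

section ElMul

variable {Y : Type*} [Semigroup Y] (idem : ∀ x : Y, x * x = x)
  (rreg : ∀ x y : Y, x * y * x = y * x) (F : BandPresheaf Y)

lemma elMul_assoc (a b c : (y : Y) × F.obj y) :
    elMul idem rreg F (elMul idem rreg F a b) c =
      elMul idem rreg F a (elMul idem rreg F b c) :=
  have hbc : bandLe (b.1 * c.1) c.1 := mul_bandLe_right idem rreg b.1 c.1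
  have habc : bandLe (a.1 * (b.1 * c.1)) (b.1 * c.1) :=
    mul_bandLe_right idem rreg a.1 (b.1 * c.1)
  calc
    elMul idem rreg F (elMul idem rreg F a b) c = F.restrict c (habc.trans hbc) :=
      F.restrict_congr c _ _ (mul_assoc a.1 b.1 c.1)
    _ = F.restrict (F.restrict c hbc) habc := (F.restrict_restrict c habc hbc).symm
    _ = elMul idem rreg F a (elMul idem rreg F b c) := rfl

lemma elMul_eq_right_iff (a b : (y : Y) × F.obj y) :
    elMul idem rreg F a b = b ↔ a.1 * b.1 = b.1 :=
  F.restrict_eq_self_iff b _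

lemma elMul_self (a : (y : Y) × F.obj y) : elMul idem rreg F a a = a :=
  (elMul_eq_right_iff idem rreg F a a).2 (idem a.1)

lemma elMul_right_regular (a b : (y : Y) × F.obj y) :
    elMul idem rreg F (elMul idem rreg F a b) a = elMul idem rreg F b a :=
  F.restrict_congr a _ _ (rreg a.1 b.1)

lemma eq_elMul_elMul_iff_bandPreceq (a b : (y : Y) × F.obj y) :
    a = elMul idem rreg F (elMul idem rreg F a b) a ↔ bandPreceq a.1 b.1 :=
  eq_comm.trans <| (elMul_eq_right_iff idem rreg F _ a).trans eq_comm

end ElMul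

/-- Let `Y` be a right regular band and `F` a presheaf of sets on
`(Y, ≤)`. Then on `E = Σ y, F y` the operation `(x,s)*(y,t) = (x*y, t|_{x*y})` is
(a) associative, idempotent and right regular; (b) the first projection is
multiplicative (a band homomorphism); (c) `(x,s) D (y,t)` in `E` iff `x D y` in
`Y` (in particular `E/D → Y/D` is injective), and the image consists of the
classes with `F` nonempty, which form a downward-closed subset of `Y/D`. -/
theorem elements_band_of_presheaf {Y : Type*} [Semigroup Y]
    (idem : ∀ x : Y, x * x = x) (rreg : ∀ x y : Y, x * y * x = y * x)
    (F : BandPresheaf Y) :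
    (∀ a b c : (y : Y) × F.obj y,
      elMul idem rreg F (elMul idem rreg F a b) c =
        elMul idem rreg F a (elMul idem rreg F b c)) ∧
    (∀ a : (y : Y) × F.obj y, elMul idem rreg F a a = a) ∧
    (∀ a b : (y : Y) × F.obj y,
      elMul idem rreg F (elMul idem rreg F a b) a = elMul idem rreg F b a) ∧
    (∀ a b : (y : Y) × F.obj y, (elMul idem rreg F a b).1 = a.1 * b.1) ∧
    (∀ a b : (y : Y) × F.obj y,
      (a = elMul idem rreg F (elMul idem rreg F a b) a ∧
       b = elMul idem rreg F (elMul idem rreg F b a) b) ↔ bandD a.1 b.1) ∧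
    (∀ x y : Y, bandPreceq x y → Nonempty (F.obj y) →
      ∃ x' : Y, bandD x' x ∧ Nonempty (F.obj x')) := by
  refine ⟨elMul_assoc idem rreg F, elMul_self idem rreg F, elMul_right_regular idem rreg F,
    fun _ _ ↦ rfl, fun a b ↦ ?_, fun x y hxy hy ↦ ?_⟩
  · exact and_congr (eq_elMul_elMul_iff_bandPreceq idem rreg F a b)
      (eq_elMul_elMul_iff_bandPreceq idem rreg F b a)
  · obtain ⟨x', hle, hD⟩ := hxy.exists_bandLe_bandD (idem y)
    exact ⟨x', hD, hy.map (F.res hle)⟩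
end

section
/- Let f : X → Y be a homomorphism of regular bands which is a covering of the underlying posets: for every x ∈ X and every y' ∈ Y with y' ≤ f(x) there exists a unique x' ∈ X with x' ≤ x and f(x') = y'. If Y is normal then X is normal. -/
/-!
The elements `z * x * y * z` and `z * y * x * z` both lie below `z`, and normality of `Y` says that
they have the same image under `f`. A covering is injective on the elements below `z`, so they are
equal.
-/

theorem bandLe.map {X Y : Type*} [Mul X] [Mul Y] {a b : X} (h : bandLe a b) (f : X →ₙ* Y) :
    bandLe (f a) (f b) :=
  ⟨by rw [← map_mul, ← h.1], by rw [← map_mul, ← h.2]⟩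

theorem bandLe_mul_mul_of_isIdempotentElem {X : Type*} [Semigroup X] {e : X}
    (he : IsIdempotentElem e) (a : X) : bandLe (e * a * e) e :=
  ⟨by rw [mul_assoc (e * a), he.eq], by rw [← mul_assoc, ← mul_assoc, he.eq]⟩

theorem injOn_bandLe_of_covering {X Y : Type*} [Mul X] [Mul Y] (f : X →ₙ* Y) {x : X}
    (cov : ∀ y' : Y, bandLe y' (f x) → ∃! x' : X, bandLe x' x ∧ f x' = y') :
    Set.InjOn f {x' | bandLe x' x} :=
  fun a ha _ hb hab ↦ (cov (f a) (ha.map f)).unique ⟨ha, rfl⟩ ⟨hb, hab.symm⟩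

theorem normal_of_covering_general {X Y : Type*} [Semigroup X] [Mul Y]
    (idemX : ∀ x : X, x * x = x) (f : X →ₙ* Y)
    (inj : ∀ x : X, Set.InjOn f {x' | bandLe x' x})
    (normY : ∀ x y z : Y, z * x * y * z = z * y * x * z) :
    ∀ x y z : X, z * x * y * z = z * y * x * z := by
  intro x y z
  have below (a b : X) : bandLe (z * a * b * z) z := by
    simpa only [mul_assoc] using bandLe_mul_mul_of_isIdempotentElem (idemX z) (a * b)
  have same_image : f (z * x * y * z) = f (z * y * x * z) := by
    simpa only [map_mul] using normY (f x) (f y) (f z)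
  exact inj z (below x y) (below y x) same_image

/-- If `f : X → Y` is a homomorphism of regular bands which is a
covering of the underlying posets and `Y` is normal, then `X` is normal. -/
theorem normal_of_covering {X Y : Type*} [Semigroup X] [Semigroup Y]
    (idemX : ∀ x : X, x * x = x) (idemY : ∀ y : Y, y * y = y)
    (regX : ∀ x y z : X, z * x * z * y * z = z * x * y * z)
    (regY : ∀ x y z : Y, z * x * z * y * z = z * x * y * z)
    (f : X →ₙ* Y)
    (cov : ∀ (x : X) (y' : Y), bandLe y' (f x) → ∃! x' : X, bandLe x' x ∧ f x' = y')
    (normY : ∀ x y z : Y, z * x * y * z = z * y * x * z) :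
    ∀ x y z : X, z * x * y * z = z * y * x * z :=
  normal_of_covering_general idemX f (fun x ↦ injOn_bandLe_of_covering f (cov x)) normY
end

section
/- Let (S, ∧, ∨) be a normal skew lattice. Then the lattice reflection S/D is a distributive lattice — equivalently, for all x, y, z ∈ S one has z∧(x∨y)∧z D (z∧x∧z)∨(z∧y∧z) — if and only if the identity z∧(x∨y)∧z = (z∧x∧z)∨(z∧y∧z) holds for all x, y, z ∈ S. -/
/-!
Both sides of the identity lie below `z` in the natural partial order of the band `(S, ∧)`: the
absorption laws express `x ≤ z` through joins, so joins of elements below `z` stay below `z`. In a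
normal band the elements below a fixed `z` commute, and commuting `D`-related elements are equal,
so below `z` the relation `D` is equality.
-/

/-- Green's `D`-relation on a skew lattice, computed with the meet operation `m`:
`x D y` iff `x∧y∧x = x` and `y∧x∧y = y`. -/
def skewD {S : Type*} (m : S → S → S) (x y : S) : Prop :=
  m (m x y) x = x ∧ m (m y x) y = y

section

variable {S : Type*} {m j : S → S → S} {x y z : S}

/-- The natural partial order `x ≤ z` of a band with operation `m`, used here to speak of the
elements below a given one. It is encoded by the two equations `x∧z = x` and `z∧x = x`. -/
def NaturalLE (m : S → S → S) (x z : S) : Prop :=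
  m x z = x ∧ m z x = x

theorem naturalLE_sandwich [Std.Associative m] [Std.IdempotentOp m] (x z : S) :
    NaturalLE m (m (m z x) z) z := by
  constructor
  · rw [Std.Associative.assoc (op := m) (m z x), Std.IdempotentOp.idempotent (op := m) z]
  · rw [← Std.Associative.assoc (op := m), ← Std.Associative.assoc (op := m),
      Std.IdempotentOp.idempotent (op := m) z]

theorem meet_eq_left_iff_join_eq_right (join_absorb : ∀ x y, j (m y x) x = x)
    (meet_absorb : ∀ x y, m x (j x y) = x) : m x z = x ↔ j x z = z :=
  ⟨fun h => by simpa only [h] using join_absorb z x,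
    fun h => by simpa only [h] using meet_absorb x z⟩

theorem meet_eq_right_iff_join_eq_left (join_absorb : ∀ x y, j x (m x y) = x)
    (meet_absorb : ∀ x y, m (j y x) x = x) : m z x = x ↔ j z x = z :=
  ⟨fun h => by simpa only [h] using join_absorb z x,
    fun h => by simpa only [h] using meet_absorb x z⟩

theorem naturalLE_iff_join (abs₁ : ∀ x y, j (m y x) x = x) (abs₂ : ∀ x y, m x (j x y) = x)
    (abs₃ : ∀ x y, j x (m x y) = x) (abs₄ : ∀ x y, m (j y x) x = x) :
    NaturalLE m x z ↔ j x z = z ∧ j z x = z :=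
  and_congr (meet_eq_left_iff_join_eq_right abs₁ abs₂) (meet_eq_right_iff_join_eq_left abs₃ abs₄)

namespace NaturalLE

theorem join [Std.Associative j] (abs₁ : ∀ x y, j (m y x) x = x) (abs₂ : ∀ x y, m x (j x y) = x)
    (abs₃ : ∀ x y, j x (m x y) = x) (abs₄ : ∀ x y, m (j y x) x = x)
    (hx : NaturalLE m x z) (hy : NaturalLE m y z) : NaturalLE m (j x y) z := by
  rw [naturalLE_iff_join abs₁ abs₂ abs₃ abs₄] at hx hy ⊢
  constructor
  · rw [Std.Associative.assoc (op := j), hy.1, hx.1]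
  · rw [← Std.Associative.assoc (op := j), hx.2, hy.2]

theorem meet_comm [Std.Associative m] (normal : ∀ x y z, m (m (m z x) y) z = m (m (m z y) x) z)
    (hx : NaturalLE m x z) (hy : NaturalLE m y z) : m x y = m y x :=
  calc
    m x y = m (m (m z x) y) z := by rw [hx.2, Std.Associative.assoc (op := m), hy.1]
    _ = m (m (m z y) x) z := normal x y z
    _ = m y x := by rw [hy.2, Std.Associative.assoc (op := m), hx.1]

end NaturalLE

namespace skewD

theorem refl [Std.IdempotentOp m] (x : S) : skewD m x x := by
  simp only [skewD, Std.IdempotentOp.idempotent (op := m), and_self]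

theorem eq_of_meet_comm [Std.Associative m] [Std.IdempotentOp m] (h : skewD m x y)
    (comm : m x y = m y x) : x = y :=
  calc
    x = m (m x y) x := h.1.symm
    _ = m y x := by
      rw [comm, Std.Associative.assoc (op := m), Std.IdempotentOp.idempotent (op := m)]
    _ = m (m y x) y := by
      rw [← comm, Std.Associative.assoc (op := m), Std.IdempotentOp.idempotent (op := m)]
    _ = y := h.2

theorem eq_of_naturalLE [Std.Associative m] [Std.IdempotentOp m]
    (normal : ∀ x y z, m (m (m z x) y) z = m (m (m z y) x) z) (h : skewD m x y)
    (hx : NaturalLE m x z) (hy : NaturalLE m y z) : x = y :=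
  h.eq_of_meet_comm (hx.meet_comm normal hy)

end skewD

end

/-- A normal skew lattice has a distributive lattice reflection
(equivalently, `z∧(x∨y)∧z D (z∧x∧z)∨(z∧y∧z)` for all `x, y, z`) iff the identity
`z∧(x∨y)∧z = (z∧x∧z)∨(z∧y∧z)` holds. -/
theorem normal_skew_lattice_distributive_reflection {S : Type*} (m j : S → S → S)
    (m_assoc : ∀ x y z : S, m (m x y) z = m x (m y z))
    (j_assoc : ∀ x y z : S, j (j x y) z = j x (j y z))
    (m_idem : ∀ x : S, m x x = x) (j_idem : ∀ x : S, j x x = x)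
    (abs₁ : ∀ x y : S, j (m y x) x = x)
    (abs₂ : ∀ x y : S, m x (j x y) = x)
    (abs₃ : ∀ x y : S, j x (m x y) = x)
    (abs₄ : ∀ x y : S, m (j y x) x = x)
    (norm : ∀ x y z : S, m (m (m z x) y) z = m (m (m z y) x) z) :
    (∀ x y z : S,
      skewD m (m (m z (j x y)) z) (j (m (m z x) z) (m (m z y) z))) ↔
    (∀ x y z : S, m (m z (j x y)) z = j (m (m z x) z) (m (m z y) z)) := by
  have : Std.Associative m := ⟨m_assoc⟩
  have : Std.Associative j := ⟨j_assoc⟩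
  have : Std.IdempotentOp m := ⟨m_idem⟩
  constructor
  · intro hD x y z
    have meet_le : NaturalLE m (m (m z (j x y)) z) z := naturalLE_sandwich (j x y) z
    have join_le : NaturalLE m (j (m (m z x) z) (m (m z y) z)) z :=
      (naturalLE_sandwich x z).join abs₁ abs₂ abs₃ abs₄ (naturalLE_sandwich y z)
    exact (hD x y z).eq_of_naturalLE norm meet_le join_le
  · intro hdistrib x y z
    rw [hdistrib x y z]
    exact skewD.refl _
end

section
/- A normal skew lattice (S, ∧, ∨) is symmetric if and only if the identities (x∧y)∨x = x∧(y∨x) and (x∨y)∧x = x∨(y∧x) hold for all x, y ∈ S. -/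
/-!
Let `x`, `y` be elements of a normal skew lattice in which commuting meets force commuting joins,
and put `z = y ∧ x ∧ y`. The element `p = z ∨ x ∨ z` lies above `z` and in the same `𝒟`-class as
`x`; normality then forces `p ∧ y = z = y ∧ p`, so `p` and `y` also commute under `∨`, which says
`z ∨ x ∨ y = y ∨ x ∨ z`. As `z ∨ x = (x ∧ y) ∨ x`, this puts `u = (x ∧ y) ∨ x` below `t = y ∨ x`
in the sense that `u ∧ t = u`. Since `u` and `x` generate the same right ideal for `∧`, a second
use of normality gives `u = x ∧ t`. The other identity is the left-right mirror image.
-/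

section

variable {S : Type*} {m j : S → S → S} {a b p t u x y : S}

local notation:70 a:70 " ⋏ " b:71 => m a b
local notation:65 a:65 " ⋎ " b:66 => j a b

/-- A band: an associative idempotent operation. -/
structure IsBand (m : S → S → S) : Prop where
  assoc : ∀ x y z : S, m (m x y) z = m x (m y z)
  idem : ∀ x : S, m x x = x

/-- A skew lattice with meet `m` and join `j`. The operations are unbundled so that both dualities,
exchanging `m` with `j` and reversing the order of all products, are instances of the same
predicate. -/
structure IsSkewLattice (m j : S → S → S) : Prop where
  meet : IsBand m
  join : IsBand j
  meet_join_self : ∀ x y : S, j (m y x) x = x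
  self_meet_join : ∀ x y : S, m x (j x y) = x
  self_join_meet : ∀ x y : S, j x (m x y) = x
  join_meet_self : ∀ x y : S, m (j y x) x = x

/-- A normal band; a skew lattice is normal when its meet is a normal band. -/
structure IsNormalBand (m : S → S → S) : Prop extends IsBand m where
  normal : ∀ x y z : S, m (m (m z x) y) z = m (m (m z y) x) z

namespace IsBand

theorem flip (h : IsBand m) : IsBand (flip m) where
  assoc x y z := (h.assoc z y x).symm
  idem := h.idem

theorem mul_mul_cancel_left (h : IsBand m) (a b : S) : a ⋏ (a ⋏ b) = a ⋏ b := by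
  rw [← h.assoc, h.idem]

theorem mul_mul_cancel_right (h : IsBand m) (a b : S) : a ⋏ b ⋏ b = a ⋏ b := by
  rw [h.assoc, h.idem]

theorem mul_mul_mul_eq (h : IsBand m) (a b : S) : a ⋏ b ⋏ a ⋏ (b ⋏ a ⋏ b) = a ⋏ b := by
  calc a ⋏ b ⋏ a ⋏ (b ⋏ a ⋏ b)
      = a ⋏ b ⋏ (a ⋏ b) ⋏ (a ⋏ b) := by simp only [h.assoc]
    _ = a ⋏ b := by rw [h.idem, h.idem]

end IsBand

namespace IsNormalBand

theorem flip (h : IsNormalBand m) : IsNormalBand (flip m) where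
  toIsBand := h.toIsBand.flip
  normal x y z := by simpa only [_root_.flip, h.assoc] using h.normal y x z

theorem mul_mul_eq_mul_mul_mul (h : IsNormalBand m) (hp : p ⋏ x ⋏ p = p) :
    y ⋏ p ⋏ y = y ⋏ p ⋏ (y ⋏ x ⋏ y) := by
  calc y ⋏ p ⋏ y
      = y ⋏ (p ⋏ x) ⋏ p ⋏ y := by rw [h.assoc y (p ⋏ x), hp]
    _ = y ⋏ p ⋏ (p ⋏ x) ⋏ y := h.normal _ _ _
    _ = y ⋏ p ⋏ x ⋏ y := by rw [h.assoc y p (p ⋏ x), h.mul_mul_cancel_left, ← h.assoc]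
    _ = y ⋏ x ⋏ p ⋏ y := h.normal _ _ _
    _ = y ⋏ x ⋏ (p ⋏ y) ⋏ y := by simp only [h.assoc, h.idem]
    _ = y ⋏ (p ⋏ y) ⋏ x ⋏ y := h.normal _ _ _
    _ = y ⋏ p ⋏ (y ⋏ x ⋏ y) := by simp only [h.assoc]

theorem mul_comm_of_mul_mul_eq (h : IsNormalBand m) (hp : p ⋏ x ⋏ p = p)
    (hpz : p ⋏ (y ⋏ x ⋏ y) = y ⋏ x ⋏ y) (hzp : y ⋏ x ⋏ y ⋏ p = y ⋏ x ⋏ y) :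
    p ⋏ y = y ⋏ p := by
  have hypy : y ⋏ p ⋏ y = y ⋏ x ⋏ y := by
    rw [h.mul_mul_eq_mul_mul_mul hp, h.assoc y p, hpz, h.assoc y x, h.mul_mul_cancel_left]
  calc p ⋏ y
      = p ⋏ (y ⋏ p ⋏ y) := by rw [h.assoc y p, ← h.assoc p y, h.idem]
    _ = y ⋏ x ⋏ y := by rw [hypy, hpz]
    _ = y ⋏ p ⋏ y ⋏ p := by rw [hypy, hzp]
    _ = y ⋏ p := by rw [h.assoc (y ⋏ p), h.idem]

theorem eq_mul_of_mul_eq (h : IsNormalBand m) (hxu : x ⋏ u = u) (hux : u ⋏ x = x)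
    (htx : t ⋏ x = x) (hut : u ⋏ t = u) : u = x ⋏ t := by
  have htu : t ⋏ u = u := by rw [← hxu, ← h.assoc, htx]
  calc u
      = t ⋏ x ⋏ u ⋏ t := by rw [htx, hxu, hut]
    _ = t ⋏ u ⋏ x ⋏ t := h.normal _ _ _
    _ = x ⋏ t := by rw [htu, hux]

end IsNormalBand

namespace IsSkewLattice

theorem swap (h : IsSkewLattice m j) : IsSkewLattice j m where
  meet := h.join
  join := h.meet
  meet_join_self := h.join_meet_self
  self_meet_join := h.self_join_meet
  self_join_meet := h.self_meet_join
  join_meet_self := h.meet_join_self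

theorem flip (h : IsSkewLattice m j) : IsSkewLattice (flip m) (flip j) where
  meet := h.meet.flip
  join := h.join.flip
  meet_join_self := h.self_join_meet
  self_meet_join := h.join_meet_self
  self_join_meet := h.meet_join_self
  join_meet_self := h.self_meet_join

theorem meet_eq_left_iff (h : IsSkewLattice m j) : a ⋏ b = a ↔ a ⋎ b = b :=
  ⟨fun hab => by simpa only [hab] using h.meet_join_self b a,
    fun hab => by simpa only [hab] using h.self_meet_join a b⟩

theorem meet_eq_right_iff (h : IsSkewLattice m j) : a ⋏ b = b ↔ a ⋎ b = a :=
  ⟨fun hab => by simpa only [hab] using h.self_join_meet a b,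
    fun hab => by simpa only [hab] using h.join_meet_self b a⟩

theorem meet_meet_eq_of_join_join_eq (h : IsSkewLattice m j) (hab : b ⋎ a ⋎ b = b) :
    a ⋏ b ⋏ a = a := by
  have hb : b ⋏ (a ⋎ b) = a ⋎ b := h.meet_eq_right_iff.2 (by rw [← h.join.assoc, hab])
  have ha : a ⋏ b ⋏ (a ⋎ b) = a := by rw [h.meet.assoc, hb, h.self_meet_join]
  calc a ⋏ b ⋏ a
      = a ⋏ b ⋏ (a ⋏ b ⋏ (a ⋎ b)) := by rw [ha]
    _ = a := by rw [h.meet.mul_mul_cancel_left, ha]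

/-- The hypotheses say that `a` and `b` lie in the same `𝒟`-class. -/
theorem join_eq_meet_of_meet_meet_eq (h : IsSkewLattice m j) (hab : a ⋏ b ⋏ a = a)
    (hba : b ⋏ a ⋏ b = b) : a ⋎ b = b ⋏ a := by
  have hca : b ⋏ a ⋎ a = a := h.meet_join_self a b
  have hcb : b ⋏ a ⋎ b = b ⋏ a := h.meet_eq_right_iff.1 hba
  calc a ⋎ b
      = b ⋏ a ⋎ b ⋎ a ⋎ b := by rw [hcb, hca]
    _ = b ⋏ a ⋎ (b ⋎ a ⋎ b) := by simp only [h.join.assoc]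
    _ = b ⋏ a := by rw [h.swap.meet_meet_eq_of_join_join_eq hab, hcb]

theorem meet_meet_join_eq (h : IsSkewLattice m j) (x y : S) : y ⋏ x ⋏ y ⋎ x = x ⋏ y ⋎ x := by
  have hjoin : y ⋏ x ⋏ y ⋎ x ⋏ y ⋏ x = x ⋏ y := by
    rw [h.join_eq_meet_of_meet_meet_eq, h.meet.mul_mul_mul_eq]
    · rw [h.meet.mul_mul_mul_eq, ← h.meet.assoc, h.meet.idem]
    · rw [h.meet.mul_mul_mul_eq, ← h.meet.assoc, h.meet.idem]
  rw [← hjoin, h.join.assoc, h.meet_join_self]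

theorem join_meet_join_eq (h : IsSkewLattice m j) (x y : S) : x ⋎ (x ⋏ y ⋎ x) = x := by
  rw [← h.join.assoc, h.self_join_meet, h.join.idem]

theorem join_join_meet_comm (h : IsSkewLattice m j) (hn : IsNormalBand m) (x y : S) :
    (y ⋏ x ⋏ y ⋎ x ⋎ y ⋏ x ⋏ y) ⋏ y = y ⋏ (y ⋏ x ⋏ y ⋎ x ⋎ y ⋏ x ⋏ y) := by
  refine hn.mul_comm_of_mul_mul_eq (x := x) (h.meet_meet_eq_of_join_join_eq ?_)
    (h.join_meet_self _ _) ?_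
  · calc x ⋎ (y ⋏ x ⋏ y ⋎ x ⋎ y ⋏ x ⋏ y) ⋎ x
        = x ⋎ (y ⋏ x ⋏ y ⋎ x) ⋎ (y ⋏ x ⋏ y ⋎ x) := by simp only [h.join.assoc]
      _ = x := by rw [h.join.mul_mul_cancel_right, h.meet_meet_join_eq, h.join_meet_join_eq]
  · rw [h.join.assoc, h.self_meet_join]

theorem meet_meet_join_join_comm (h : IsSkewLattice m j) (hn : IsNormalBand m)
    (hj : ∀ x y : S, x ⋏ y = y ⋏ x → x ⋎ y = y ⋎ x) (x y : S) :
    y ⋏ x ⋏ y ⋎ x ⋎ y = y ⋎ x ⋎ y ⋏ x ⋏ y := by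
  have hyz : y ⋎ y ⋏ x ⋏ y = y := by rw [h.meet.assoc, h.self_join_meet]
  calc y ⋏ x ⋏ y ⋎ x ⋎ y
      = y ⋏ x ⋏ y ⋎ x ⋎ y ⋏ x ⋏ y ⋎ y := by rw [h.join.assoc _ (y ⋏ x ⋏ y), h.meet_join_self]
    _ = y ⋎ (y ⋏ x ⋏ y ⋎ x ⋎ y ⋏ x ⋏ y) := hj _ _ (h.join_join_meet_comm hn x y)
    _ = y ⋎ x ⋎ y ⋏ x ⋏ y := by rw [← h.join.assoc, ← h.join.assoc, hyz]

theorem meet_join_eq_meet_join (h : IsSkewLattice m j) (hn : IsNormalBand m)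
    (hj : ∀ x y : S, x ⋏ y = y ⋏ x → x ⋎ y = y ⋎ x) (x y : S) :
    x ⋏ y ⋎ x = x ⋏ (y ⋎ x) := by
  have join_eq_right : x ⋏ y ⋎ x ⋎ (y ⋎ x) = y ⋎ x := by
    calc x ⋏ y ⋎ x ⋎ (y ⋎ x)
        = y ⋏ x ⋏ y ⋎ x ⋎ y ⋎ x := by rw [← h.meet_meet_join_eq, ← h.join.assoc]
      _ = y ⋎ x ⋎ y ⋏ x ⋏ y ⋎ x := by rw [h.meet_meet_join_join_comm hn hj]
      _ = y ⋎ (x ⋎ (x ⋏ y ⋎ x)) := by rw [← h.meet_meet_join_eq]; simp only [h.join.assoc]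
      _ = y ⋎ x := by rw [h.join_meet_join_eq]
  exact hn.eq_mul_of_mul_eq (h.meet_eq_right_iff.2 (h.join_meet_join_eq x y))
    (h.join_meet_self _ _) (h.join_meet_self _ _) (h.meet_eq_left_iff.2 join_eq_right)

theorem join_comm_of_meet_comm (h : IsSkewLattice m j) (hmj : x ⋏ y ⋎ x = x ⋏ (y ⋎ x))
    (hjm : (x ⋎ y) ⋏ x = x ⋎ y ⋏ x) (hxy : x ⋏ y = y ⋏ x) : x ⋎ y = y ⋎ x := by
  have hleft : x ⋏ (y ⋎ x) = x := by rw [← hmj, hxy, h.meet_join_self]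
  have hright : (x ⋎ y) ⋏ x = x := by rw [hjm, ← hxy, h.self_join_meet]
  calc x ⋎ y
      = x ⋎ y ⋎ x := (h.meet_eq_right_iff.1 hright).symm
    _ = x ⋎ (y ⋎ x) := h.join.assoc _ _ _
    _ = y ⋎ x := h.meet_eq_left_iff.1 hleft

end IsSkewLattice

theorem normal_skew_lattice_symmetric_iff_general (h : IsSkewLattice m j) (hn : IsNormalBand m) :
    [∀ x y : S, x ⋏ y = y ⋏ x → x ⋎ y = y ⋎ x,
      ∀ x y : S, x ⋏ y = y ⋏ x ↔ x ⋎ y = y ⋎ x,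
      ∀ x y : S, x ⋏ y ⋎ x = x ⋏ (y ⋎ x) ∧ (x ⋎ y) ⋏ x = x ⋎ y ⋏ x].TFAE := by
  tfae_have 1 → 3 := fun hj x y =>
    ⟨h.meet_join_eq_meet_join hn hj x y,
      (h.flip.meet_join_eq_meet_join hn.flip
        (fun a b hab => (hj a b hab.symm).symm) x y).symm⟩
  tfae_have 3 → 2 := fun H x y =>
    ⟨h.join_comm_of_meet_comm (H x y).1 (H x y).2,
      h.swap.join_comm_of_meet_comm (H x y).2 (H x y).1⟩
  tfae_have 2 → 1 := fun hs x y => (hs x y).1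
  tfae_finish

end

/-- A normal skew lattice is symmetric iff the identities
`(x∧y)∨x = x∧(y∨x)` and `(x∨y)∧x = x∨(y∧x)` hold. -/
theorem normal_skew_lattice_symmetric_iff {S : Type*} (m j : S → S → S)
    (m_assoc : ∀ x y z : S, m (m x y) z = m x (m y z))
    (j_assoc : ∀ x y z : S, j (j x y) z = j x (j y z))
    (m_idem : ∀ x : S, m x x = x) (j_idem : ∀ x : S, j x x = x)
    (abs₁ : ∀ x y : S, j (m y x) x = x)
    (abs₂ : ∀ x y : S, m x (j x y) = x)
    (abs₃ : ∀ x y : S, j x (m x y) = x)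
    (abs₄ : ∀ x y : S, m (j y x) x = x)
    (norm : ∀ x y z : S, m (m (m z x) y) z = m (m (m z y) x) z) :
    (∀ x y : S, m x y = m y x ↔ j x y = j y x) ↔
    (∀ x y : S, j (m x y) x = m x (j y x) ∧ m (j x y) x = j x (m y x)) :=
  (normal_skew_lattice_symmetric_iff_general
    ⟨⟨m_assoc, m_idem⟩, ⟨j_assoc, j_idem⟩, abs₁, abs₂, abs₃, abs₄⟩
    ⟨⟨m_assoc, m_idem⟩, norm⟩).out 1 2
end

section
/- A normal skew lattice (S, ∧, ∨) is symmetric and has a distributive lattice reflection S/D — the latter equivalently expressed as: for all x, y, z ∈ S, z∧(x∨y)∧z D (z∧x∧z)∨(z∧y∧z) — if and only if the two identities x∧(y∨z) = (x∧y)∨(x∧z) and (x∨y)∧z = (x∧z)∨(y∧z) hold for all x, y, z ∈ S. -/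
/-- A skew lattice, with `∧` and `∨` written `⊓` and `⊔`. -/
class SkewLattice (S : Type*) extends Min S, Max S where
  inf_assoc (x y z : S) : x ⊓ y ⊓ z = x ⊓ (y ⊓ z)
  sup_assoc (x y z : S) : x ⊔ y ⊔ z = x ⊔ (y ⊔ z)
  inf_idem (x : S) : x ⊓ x = x
  sup_idem (x : S) : x ⊔ x = x
  inf_sup_right_self (x y : S) : y ⊓ x ⊔ x = x
  inf_sup_self (x y : S) : x ⊓ (x ⊔ y) = x
  sup_inf_self (x y : S) : x ⊔ x ⊓ y = x
  sup_inf_right_self (x y : S) : (y ⊔ x) ⊓ x = x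

namespace SkewLattice

/-- The vertical dual, which exchanges `⊓` and `⊔`. -/
instance instOrderDual (S : Type*) [SkewLattice S] : SkewLattice Sᵒᵈ where
  inf_assoc := sup_assoc (S := S)
  sup_assoc := inf_assoc (S := S)
  inf_idem := sup_idem (S := S)
  sup_idem := inf_idem (S := S)
  inf_sup_right_self := sup_inf_right_self (S := S)
  inf_sup_self := sup_inf_self (S := S)
  sup_inf_self := inf_sup_self (S := S)
  sup_inf_right_self := inf_sup_right_self (S := S)

/-- The horizontal dual of a skew lattice: a type synonym on which both operations take their
arguments in the opposite order. -/
def Reverse (S : Type*) : Type _ := S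

instance Reverse.instSkewLattice (S : Type*) [SkewLattice S] : SkewLattice (Reverse S) where
  min x y := (y ⊓ x : S)
  max x y := (y ⊔ x : S)
  inf_assoc x y z := (inf_assoc (S := S) z y x).symm
  sup_assoc x y z := (sup_assoc (S := S) z y x).symm
  inf_idem := inf_idem (S := S)
  sup_idem := sup_idem (S := S)
  inf_sup_right_self := sup_inf_self (S := S)
  inf_sup_self := sup_inf_right_self (S := S)
  sup_inf_self := inf_sup_right_self (S := S)
  sup_inf_right_self := inf_sup_self (S := S)

section Properties

variable (S : Type*) [SkewLattice S]

/-- Normality: the meet operation is a normal band. -/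
def IsNormal : Prop := ∀ x y z : S, z ⊓ x ⊓ y ⊓ z = z ⊓ y ⊓ x ⊓ z

/-- Upper symmetry, the half of symmetry that passes from meets to joins. -/
def IsUpperSymmetric : Prop := ∀ x y : S, x ⊓ y = y ⊓ x → x ⊔ y = y ⊔ x

/-- Lower symmetry, the half of symmetry that passes from joins to meets. -/
def IsLowerSymmetric : Prop := ∀ x y : S, x ⊔ y = y ⊔ x → x ⊓ y = y ⊓ x

/-- Quasi-distributivity: the lattice reflection `S/D` is distributive, written out in `S`. -/
def IsQuasiDistributive : Prop :=
  ∀ x y z : S, skewD (· ⊓ ·) (z ⊓ (x ⊔ y) ⊓ z) (z ⊓ x ⊓ z ⊔ z ⊓ y ⊓ z)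

/-- Strong distributivity: meets distribute over joins from both sides. -/
def IsStronglyDistributive : Prop :=
  ∀ x y z : S, x ⊓ (y ⊔ z) = x ⊓ y ⊔ x ⊓ z ∧ (x ⊔ y) ⊓ z = x ⊓ z ⊔ y ⊓ z

end Properties

variable {S : Type*} [SkewLattice S] {a b d e k p q r x y : S}

theorem inf_inf_cancel_left (x y : S) : x ⊓ (x ⊓ y) = x ⊓ y := by rw [← inf_assoc, inf_idem]

theorem inf_eq_left_iff_sup_eq_right : p ⊓ q = p ↔ p ⊔ q = q :=
  ⟨fun h => by simpa only [h] using inf_sup_right_self q p,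
    fun h => by simpa only [h] using inf_sup_self p q⟩

theorem inf_eq_right_iff_sup_eq_left : p ⊓ q = q ↔ p ⊔ q = p :=
  ⟨fun h => by simpa only [h] using sup_inf_self p q,
    fun h => by simpa only [h] using sup_inf_right_self q p⟩

/-- The natural preorder of a skew lattice; its symmetric part is Green's relation `D`. -/
def NatLE (x y : S) : Prop := x ⊓ y ⊓ x = x

local infix:50 " ≼ " => NatLE

theorem natLE_of_inf_inf_eq (h : p ⊓ q ⊓ b = p) : p ≼ q :=
  calc p ⊓ q ⊓ p = p ⊓ q ⊓ (p ⊓ q ⊓ b) := by rw [h]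
    _ = p := by rw [inf_inf_cancel_left, h]

theorem inf_inf_natLE (a q b : S) : a ⊓ q ⊓ b ≼ q :=
  natLE_of_inf_inf_eq (b := b) (by rw [inf_assoc, inf_assoc a q b, inf_assoc, inf_idem])

theorem NatLE.refl (x : S) : x ≼ x := by rw [NatLE, inf_idem, inf_idem]

theorem NatLE.trans (hpq : p ≼ q) (hqr : q ≼ r) : p ≼ r := by
  have hp : p ⊓ q ⊓ r ⊓ (q ⊓ p) = p :=
    calc p ⊓ q ⊓ r ⊓ (q ⊓ p) = p ⊓ (q ⊓ r ⊓ q) ⊓ p := by simp only [inf_assoc]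
      _ = p := by rw [hqr, hpq]
  simpa only [hp] using inf_inf_natLE (p ⊓ q) r (q ⊓ p)

theorem inf_natLE_left (x y : S) : x ⊓ y ≼ x := by
  simpa only [inf_idem] using inf_inf_natLE x x y

theorem inf_natLE_right (x y : S) : x ⊓ y ≼ y := by
  simpa only [inf_assoc, inf_idem] using inf_inf_natLE x y y

theorem natLE_inf (hp : k ≼ p) (hq : k ≼ q) : k ≼ p ⊓ q :=
  calc k ⊓ (p ⊓ q) ⊓ k = k ⊓ q ⊓ k ⊓ (p ⊓ q) ⊓ (k ⊓ p ⊓ k) := by rw [hp, hq]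
    _ = k ⊓ ((q ⊓ k ⊓ p) ⊓ (q ⊓ k ⊓ p)) ⊓ k := by simp only [inf_assoc]
    _ = k ⊓ q ⊓ k ⊓ p ⊓ k := by rw [inf_idem]; simp only [inf_assoc]
    _ = k := by rw [hq, hp]

theorem NatLE.sup_sup_eq (h : k ≼ p) : p ⊔ k ⊔ p = p := by
  have hk : k ⊔ p ⊓ k = p ⊓ k := inf_eq_left_iff_sup_eq_right.mp (by rw [← inf_assoc, h])
  have hp : p ⊔ k ⊔ p ⊓ k = p := by rw [sup_assoc, hk, sup_inf_self]
  exact natLE_of_inf_inf_eq (S := Sᵒᵈ) hp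

theorem natLE_iff_sup_sup_eq : k ≼ p ↔ p ⊔ k ⊔ p = p :=
  ⟨NatLE.sup_sup_eq, NatLE.sup_sup_eq (S := Sᵒᵈ)⟩

theorem natLE_sup_left (x y : S) : x ≼ x ⊔ y := by rw [NatLE, inf_sup_self, inf_idem]

theorem natLE_sup_right (x y : S) : y ≼ x ⊔ y := by
  rw [NatLE, inf_assoc, sup_inf_right_self, inf_idem]

theorem sup_natLE (hp : p ≼ r) (hq : q ≼ r) : p ⊔ q ≼ r :=
  natLE_iff_sup_sup_eq.mpr (natLE_inf (S := Sᵒᵈ) hp.sup_sup_eq hq.sup_sup_eq)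

theorem sup_natLE_sup (hpq : p ≼ q) (hxy : x ≼ y) : p ⊔ x ≼ q ⊔ y :=
  sup_natLE (hpq.trans (natLE_sup_left q y)) (hxy.trans (natLE_sup_right q y))

theorem inf_natLE_inf_inf_self (x y : S) : x ⊓ y ≼ x ⊓ y ⊓ x :=
  natLE_inf (.refl _) (inf_natLE_left x y)

theorem sup_sup_eq_of_natLE (hp : k ≼ p) (hq : k ≼ q) : p ⊔ k ⊔ q = p ⊔ q := by
  -- `m` lies in the `D`-class of `k` and is absorbed by `p` on the left and by `q` on the right.
  let m := p ⊓ k ⊓ q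
  have hpm : p ⊔ m = p := inf_eq_right_iff_sup_eq_left.mp (by
    simp only [m, inf_assoc, inf_inf_cancel_left])
  have hmq : m ⊔ q = q := inf_eq_left_iff_sup_eq_right.mp (by
    simp only [m, inf_assoc, inf_idem])
  have hkm : m ⊔ k ⊔ m = m := (natLE_inf (natLE_inf hp (.refl k)) hq).sup_sup_eq
  calc p ⊔ k ⊔ q = p ⊔ (m ⊔ k ⊔ m) ⊔ q := by
        conv_lhs => rw [← hpm, ← hmq]
        simp only [sup_assoc]
    _ = p ⊔ q := by rw [hkm, hpm]

theorem inf_eq_of_natLE (hek : e ⊓ k = k) (hke : k ⊓ e = k) (hdk : d ⊓ k = k) (hkd : k ⊓ d = k)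
    (h : e ⊓ d ≼ k) : e ⊓ d = k :=
  calc e ⊓ d = e ⊓ (d ⊓ k) ⊓ (e ⊓ d) := by rw [← inf_assoc e d k, h]
    _ = k := by rw [hdk, hek, ← inf_assoc, hke, hkd]

theorem inf_comm_sup_inf_inf_self (y b : S) :
    (y ⊓ b ⊓ y ⊔ b ⊔ y ⊓ b ⊓ y) ⊓ y = y ⊓ (y ⊓ b ⊓ y ⊔ b ⊔ y ⊓ b ⊓ y) := by
  set k := y ⊓ b ⊓ y with hk
  set e := k ⊔ b ⊔ k with he
  have hyk : y ⊓ k = k := by simp only [hk, inf_assoc, inf_inf_cancel_left]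
  have hky : k ⊓ y = k := by simp only [hk, inf_assoc, inf_idem]
  have hke : k ⊓ e = k := by rw [he, sup_assoc, inf_sup_self]
  have hek : e ⊓ k = k := sup_inf_right_self k (k ⊔ b)
  have heb : e ≼ b :=
    have hkb : k ≼ b := inf_inf_natLE y b y
    sup_natLE (sup_natLE hkb (.refl b)) hkb
  have natLE_k : ∀ {c : S}, c ≼ e → c ≼ y → c ≼ k := fun hce hcy =>
    natLE_inf (natLE_inf hcy (hce.trans heb)) hcy
  have hey : e ⊓ y = k :=
    inf_eq_of_natLE hek hke hyk hky (natLE_k (inf_natLE_left e y) (inf_natLE_right e y))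
  have hye : y ⊓ e = k :=
    inf_eq_of_natLE hyk hky hek hke (natLE_k (inf_natLE_right y e) (inf_natLE_left y e))
  rw [hey, hye]

theorem IsUpperSymmetric.inf_inf_sup_sup_comm (hs : IsUpperSymmetric S) (y b : S) :
    y ⊓ b ⊓ y ⊔ b ⊔ y = y ⊔ b ⊔ y ⊓ b ⊓ y := by
  have hcomm := hs _ _ (inf_comm_sup_inf_inf_self y b)
  have hky : y ⊓ b ⊓ y ⊔ y = y := inf_sup_right_self y (y ⊓ b)
  have hyk : y ⊔ y ⊓ b ⊓ y = y := by rw [inf_assoc, sup_inf_self]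
  calc y ⊓ b ⊓ y ⊔ b ⊔ y = y ⊓ b ⊓ y ⊔ b ⊔ y ⊓ b ⊓ y ⊔ y := by
        rw [sup_assoc (_ ⊔ b), hky]
    _ = y ⊔ y ⊓ b ⊓ y ⊔ b ⊔ y ⊓ b ⊓ y := by rw [hcomm]; simp only [sup_assoc]
    _ = y ⊔ b ⊔ y ⊓ b ⊓ y := by rw [hyk]

theorem IsUpperSymmetric.inf_sup_inf_inf_sup (hs : IsUpperSymmetric S) (x y z : S) :
    (x ⊓ y ⊔ x ⊓ z) ⊓ (y ⊔ z) = x ⊓ y ⊔ x ⊓ z := by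
  set b := x ⊓ z
  set k := y ⊓ b ⊓ y
  have hkb : k ≼ b := inf_inf_natLE y b y
  have hkxy : k ≼ x ⊓ y := natLE_inf (hkb.trans (inf_natLE_left x z)) (inf_natLE_right (y ⊓ b) y)
  have hkyb : k ≼ y ⊔ b := hkb.trans (natLE_sup_right y b)
  have hkz : k ≼ z := hkb.trans (inf_natLE_right x z)
  rw [inf_eq_left_iff_sup_eq_right]
  calc x ⊓ y ⊔ b ⊔ (y ⊔ z) = x ⊓ y ⊔ (k ⊔ b ⊔ y) ⊔ z := by
        rw [← sup_sup_eq_of_natLE hkxy hkb]; simp only [sup_assoc]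
    _ = x ⊓ y ⊔ y ⊔ b ⊔ k ⊔ z := by
        rw [hs.inf_inf_sup_sup_comm y b]; simp only [sup_assoc, k]
    _ = y ⊔ b ⊔ k ⊔ z := by rw [inf_sup_right_self]
    _ = y ⊔ b ⊔ z := sup_sup_eq_of_natLE hkyb hkz
    _ = y ⊔ z := by rw [sup_assoc, inf_sup_right_self]

theorem IsNormal.eq_of_natLE_of_natLE (hn : IsNormal S) (hpq : p ≼ q) (hqp : q ≼ p)
    (hap : a ⊓ p = p) (haq : a ⊓ q = q) (hpb : p ⊓ b = p) (hqb : q ⊓ b = q) : p = q := by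
  have hleft : p ⊓ q ⊓ a = q ⊓ p ⊓ a := by simpa only [hap, haq] using hn p q a
  have hright : b ⊓ p ⊓ q = b ⊓ q ⊓ p := by
    simpa only [inf_assoc, hpb, hqb] using hn p q b
  calc p = p ⊓ b ⊓ q ⊓ p := by rw [hpb, hpq]
    _ = p ⊓ (b ⊓ q ⊓ p) := by simp only [inf_assoc]
    _ = p ⊓ q := by rw [← hright, ← inf_assoc, ← inf_assoc, hpb, inf_idem]
    _ = p ⊓ q ⊓ a ⊓ q := by rw [inf_assoc (p ⊓ q), haq, inf_assoc, inf_idem]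
    _ = q := by rw [hleft, inf_assoc, haq, hqp]

theorem IsNormal.inf_sup_left (hn : IsNormal S) (hs : IsUpperSymmetric S)
    (hd : IsQuasiDistributive S) (x y z : S) : x ⊓ (y ⊔ z) = x ⊓ y ⊔ x ⊓ z := by
  obtain ⟨hvr, hrv⟩ : x ⊓ (y ⊔ z) ⊓ x ≼ x ⊓ y ⊓ x ⊔ x ⊓ z ⊓ x ∧
      x ⊓ y ⊓ x ⊔ x ⊓ z ⊓ x ≼ x ⊓ (y ⊔ z) ⊓ x := hd y z x
  have hvu : x ⊓ (y ⊔ z) ≼ x ⊓ y ⊔ x ⊓ z :=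
    ((inf_natLE_inf_inf_self x (y ⊔ z)).trans hvr).trans
      (sup_natLE_sup (inf_natLE_left _ x) (inf_natLE_left _ x))
  have huv : x ⊓ y ⊔ x ⊓ z ≼ x ⊓ (y ⊔ z) :=
    ((sup_natLE_sup (inf_natLE_inf_inf_self x y) (inf_natLE_inf_inf_self x z)).trans hrv).trans
      (inf_natLE_left _ x)
  have hxu : x ⊓ (x ⊓ y ⊔ x ⊓ z) = x ⊓ y ⊔ x ⊓ z :=
    inf_eq_right_iff_sup_eq_left.mpr (by rw [← sup_assoc, sup_inf_self, sup_inf_self])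
  exact hn.eq_of_natLE_of_natLE hvu huv (inf_inf_cancel_left _ _) hxu
    (by rw [inf_assoc, inf_idem]) (hs.inf_sup_inf_inf_sup x y z)

theorem IsNormal.reverse (hn : IsNormal S) : IsNormal (Reverse S) := fun (x y z : S) => by
  change z ⊓ (y ⊓ (x ⊓ z)) = z ⊓ (x ⊓ (y ⊓ z))
  simpa only [inf_assoc] using hn y x z

theorem IsUpperSymmetric.reverse (hs : IsUpperSymmetric S) : IsUpperSymmetric (Reverse S) :=
  fun (x y : S) => hs y x

theorem IsQuasiDistributive.reverse (hd : IsQuasiDistributive S) :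
    IsQuasiDistributive (Reverse S) := fun (x y z : S) => by
  change skewD (fun a b => b ⊓ a) (z ⊓ ((y ⊔ x) ⊓ z)) (z ⊓ (y ⊓ z) ⊔ z ⊓ (x ⊓ z))
  simpa only [skewD, inf_assoc] using hd y x z

theorem IsNormal.isStronglyDistributive (hn : IsNormal S) (hs : IsUpperSymmetric S)
    (hd : IsQuasiDistributive S) : IsStronglyDistributive S := fun x y z =>
  ⟨hn.inf_sup_left hs hd x y z, hn.reverse.inf_sup_left hs.reverse hd.reverse z y x⟩

theorem IsStronglyDistributive.isUpperSymmetric (h : IsStronglyDistributive S) :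
    IsUpperSymmetric S := fun x y hxy =>
  calc x ⊔ y = (x ⊔ y) ⊓ (y ⊔ x) := by
        rw [(h x y (y ⊔ x)).2, inf_sup_self, (h x y x).1, inf_idem, hxy, inf_sup_right_self]
    _ = y ⊔ x := by
        rw [(h (x ⊔ y) y x).1, sup_inf_right_self, (h x y x).2, inf_idem, ← hxy, sup_inf_self]

theorem IsNormal.isLowerSymmetric (hn : IsNormal S) : IsLowerSymmetric S := fun x y hxy => by
  have hx : (x ⊔ y) ⊓ x = x := by rw [hxy, sup_inf_right_self]
  have hy : y ⊓ (x ⊔ y) = y := by rw [hxy, inf_sup_self]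
  simpa only [hx, sup_inf_right_self, inf_assoc, hy, inf_sup_self] using hn x y (x ⊔ y)

theorem IsStronglyDistributive.isQuasiDistributive (h : IsStronglyDistributive S) :
    IsQuasiDistributive S := fun x y z => by
  rw [(h z x y).1, (h _ _ z).2]
  exact ⟨NatLE.refl _, NatLE.refl _⟩

end SkewLattice

/-- A normal skew lattice is symmetric with distributive lattice
reflection iff the two distributivity identities `x∧(y∨z) = (x∧y)∨(x∧z)` and
`(x∨y)∧z = (x∧z)∨(y∧z)` hold. -/
theorem normal_skew_lattice_distributive_iff {S : Type*} (m j : S → S → S)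
    (m_assoc : ∀ x y z : S, m (m x y) z = m x (m y z))
    (j_assoc : ∀ x y z : S, j (j x y) z = j x (j y z))
    (m_idem : ∀ x : S, m x x = x) (j_idem : ∀ x : S, j x x = x)
    (abs₁ : ∀ x y : S, j (m y x) x = x)
    (abs₂ : ∀ x y : S, m x (j x y) = x)
    (abs₃ : ∀ x y : S, j x (m x y) = x)
    (abs₄ : ∀ x y : S, m (j y x) x = x)
    (norm : ∀ x y z : S, m (m (m z x) y) z = m (m (m z y) x) z) :
    ((∀ x y : S, m x y = m y x ↔ j x y = j y x) ∧
     (∀ x y z : S,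
       skewD m (m (m z (j x y)) z) (j (m (m z x) z) (m (m z y) z)))) ↔
    (∀ x y z : S, m x (j y z) = j (m x y) (m x z) ∧ m (j x y) z = j (m x z) (m y z)) := by
  let : SkewLattice S :=
    { min := m, max := j, inf_assoc := m_assoc, sup_assoc := j_assoc
      inf_idem := m_idem, sup_idem := j_idem, inf_sup_right_self := abs₁
      inf_sup_self := abs₂, sup_inf_self := abs₃, sup_inf_right_self := abs₄ }
  have normal : SkewLattice.IsNormal S := norm
  constructor
  · rintro ⟨symmetric, quasiDistributive⟩
    exact normal.isStronglyDistributive (fun x y => (symmetric x y).mp) quasiDistributive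
  · intro (distributive : SkewLattice.IsStronglyDistributive S)
    exact ⟨fun x y => ⟨distributive.isUpperSymmetric x y, normal.isLowerSymmetric x y⟩,
      distributive.isQuasiDistributive⟩
end

section
/- Let (S, ∧, ∨) be a right-handed normal skew lattice satisfying the distributivity identities x∧(y∨z) = (x∧y)∨(x∧z) and (x∨y)∧z = (x∧z)∨(y∧z) for all x, y, z (i.e., a right-handed distributive skew lattice). Suppose a ∈ S is a global element, meaning x∧a∧x = x for all x ∈ S, and that a is the unique such element (every b ∈ S with x∧b∧x = x for all x satisfies b = a). Then S is commutative: x∧y = y∧x and x∨y = y∨x for all x, y ∈ S. -/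
/-!
If `a` is global, then so are `x ∨ a` and `a ∨ x`, since absorption puts both above `a`. When `a` is
the only global element, this says `x ∨ a = a = a ∨ x`, and two more absorptions turn `a` into a
two-sided identity for `∧`. Normality read between two copies of `a` is then commutativity of `∧`,
and in a skew lattice commutativity of `∧` forces that of `∨`.
-/

section

variable {S : Type*} (m j : S → S → S)

local infixl:70 " ⋏ " => m
local infixl:65 " ⋎ " => j

/-- A band, that is, an idempotent semigroup, as a predicate on its operation. -/
structure IsBand_s15 : Prop where
  assoc : ∀ x y z, x ⋏ y ⋏ z = x ⋏ (y ⋏ z)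
  idem : ∀ x, x ⋏ x = x

/-- A skew lattice, as a predicate on its operations: `m` is the meet and `j` is the join. The
suffix of an absorption law tells which operand of the outer operation is the lone `x`. -/
structure IsSkewLattice_s15 : Prop where
  meet_band : IsBand_s15 m
  join_band : IsBand_s15 j
  meet_absorb_left : ∀ x y, x ⋏ (x ⋎ y) = x
  meet_absorb_right : ∀ x y, (y ⋎ x) ⋏ x = x
  join_absorb_left : ∀ x y, x ⋎ x ⋏ y = x
  join_absorb_right : ∀ x y, y ⋏ x ⋎ x = x

/-- The normality identity; a skew lattice is normal when its meet satisfies it. -/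
def IsNormalOp : Prop :=
  ∀ x y z, z ⋏ x ⋏ y ⋏ z = z ⋏ y ⋏ x ⋏ z

/-- A global element. In a skew lattice with meet `m`, these form the top class of the lattice
reflection. -/
def IsGlobalElement (a : S) : Prop :=
  ∀ x, x ⋏ a ⋏ x = x

variable {m j} {a b : S}

theorem IsGlobalElement.of_meet_eq_right (ha : IsGlobalElement m a) (hm : IsBand_s15 m)
    (hba : b ⋏ a = a) : IsGlobalElement m b := by
  intro z
  have hz : z ⋏ b ⋏ (a ⋏ z) = z := by rw [hm.assoc, ← hm.assoc b, hba, ← hm.assoc, ha]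
  calc
    z ⋏ b ⋏ z = z ⋏ b ⋏ (z ⋏ b ⋏ (a ⋏ z)) := by rw [hz]
    _ = z ⋏ b ⋏ (a ⋏ z) := by rw [← hm.assoc, hm.idem]
    _ = z := hz

theorem IsGlobalElement.of_meet_eq_left (ha : IsGlobalElement m a) (hm : IsBand_s15 m)
    (hab : a ⋏ b = a) : IsGlobalElement m b := by
  intro z
  have hz : z ⋏ a ⋏ (b ⋏ z) = z := by rw [← hm.assoc, hm.assoc z, hab, ha]
  calc
    z ⋏ b ⋏ z = z ⋏ a ⋏ (b ⋏ z) ⋏ (b ⋏ z) := by rw [hz, hm.assoc]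
    _ = z ⋏ a ⋏ (b ⋏ z) := by rw [hm.assoc, hm.idem]
    _ = z := hz

theorem IsNormalOp.comm_of_identity (hn : IsNormalOp m) (left_id : ∀ x, a ⋏ x = x)
    (right_id : ∀ x, x ⋏ a = x) (x y : S) : x ⋏ y = y ⋏ x := by
  simpa only [left_id, right_id] using hn x y a

namespace IsSkewLattice_s15

theorem isGlobalElement_join_right (h : IsSkewLattice_s15 m j) (ha : IsGlobalElement m a) (x : S) :
    IsGlobalElement m (x ⋎ a) :=
  ha.of_meet_eq_right h.meet_band (h.meet_absorb_right a x)

theorem isGlobalElement_join_left (h : IsSkewLattice_s15 m j) (ha : IsGlobalElement m a) (x : S) :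
    IsGlobalElement m (a ⋎ x) :=
  ha.of_meet_eq_left h.meet_band (h.meet_absorb_left a x)

theorem meet_eq_left_of_join_eq_right (h : IsSkewLattice_s15 m j) (hab : a ⋎ b = b) : a ⋏ b = a := by
  simpa only [hab] using h.meet_absorb_left a b

theorem meet_eq_right_of_join_eq_left (h : IsSkewLattice_s15 m j) (hab : a ⋎ b = a) : a ⋏ b = b := by
  simpa only [hab] using h.meet_absorb_right b a

theorem join_eq_right_of_meet_eq_left (h : IsSkewLattice_s15 m j) (hab : a ⋏ b = a) : a ⋎ b = b := by
  simpa only [hab] using h.join_absorb_right b a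

theorem join_eq_left_of_meet_eq_right (h : IsSkewLattice_s15 m j) (hab : a ⋏ b = b) : a ⋎ b = a := by
  simpa only [hab] using h.join_absorb_left a b

theorem join_comm_of_meet_comm_s15 (h : IsSkewLattice_s15 m j) (meet_comm : ∀ x y, x ⋏ y = y ⋏ x)
    (x y : S) : x ⋎ y = y ⋎ x := by
  have hxy : (x ⋎ y) ⋏ x = x := by rw [meet_comm, h.meet_absorb_left]
  have hyx : x ⋏ (y ⋎ x) = x := by rw [meet_comm, h.meet_absorb_right]
  calc
    x ⋎ y = x ⋎ y ⋎ x := (h.join_eq_left_of_meet_eq_right hxy).symm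
    _ = x ⋎ (y ⋎ x) := h.join_band.assoc x y x
    _ = y ⋎ x := h.join_eq_right_of_meet_eq_left hyx

end IsSkewLattice_s15

theorem right_distributive_skew_lattice_unique_global_commutative_general
    (h : IsSkewLattice_s15 m j) (hn : IsNormalOp m) (ha : IsGlobalElement m a)
    (ha_unique : ∀ b, IsGlobalElement m b → b = a) (x y : S) :
    x ⋏ y = y ⋏ x ∧ x ⋎ y = y ⋎ x := by
  have left_id (x : S) : a ⋏ x = x :=
    h.meet_eq_right_of_join_eq_left (ha_unique _ (h.isGlobalElement_join_left ha x))
  have right_id (x : S) : x ⋏ a = x :=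
    h.meet_eq_left_of_join_eq_right (ha_unique _ (h.isGlobalElement_join_right ha x))
  have meet_comm := hn.comm_of_identity left_id right_id
  exact ⟨meet_comm x y, h.join_comm_of_meet_comm_s15 meet_comm x y⟩

end

/-- A right-handed normal skew lattice satisfying the two
distributivity identities (i.e. a right-handed distributive skew lattice) which
has a unique global element is commutative. -/
theorem right_distributive_skew_lattice_unique_global_commutative
    {S : Type*} (m j : S → S → S)
    (m_assoc : ∀ x y z : S, m (m x y) z = m x (m y z))
    (j_assoc : ∀ x y z : S, j (j x y) z = j x (j y z))
    (m_idem : ∀ x : S, m x x = x) (j_idem : ∀ x : S, j x x = x)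
    (abs₁ : ∀ x y : S, j (m y x) x = x)
    (abs₂ : ∀ x y : S, m x (j x y) = x)
    (abs₃ : ∀ x y : S, j x (m x y) = x)
    (abs₄ : ∀ x y : S, m (j y x) x = x)
    (norm : ∀ x y z : S, m (m (m z x) y) z = m (m (m z y) x) z)
    (rh : ∀ x y : S, m (m x y) x = m y x)
    (distrib₁ : ∀ x y z : S, m x (j y z) = j (m x y) (m x z))
    (distrib₂ : ∀ x y z : S, m (j x y) z = j (m x z) (m y z))
    (a : S) (ha : ∀ x : S, m (m x a) x = x)
    (ha_unique : ∀ b : S, (∀ x : S, m (m x b) x = x) → b = a) :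
    ∀ x y : S, m x y = m y x ∧ j x y = j y x :=
  right_distributive_skew_lattice_unique_global_commutative_general
    ⟨⟨m_assoc, m_idem⟩, ⟨j_assoc, j_idem⟩, abs₂, abs₄, abs₃, abs₁⟩ norm ha ha_unique
end

section
/- Let (S, ∧, ∨) be a symmetric skew lattice and let x, y ∈ S satisfy x∧y = y∧x. Then x∨y = y∨x and x∨y is the least upper bound of x and y with respect to the natural partial order of the band (S, ∧), i.e. x ≤ x∨y, y ≤ x∨y, and every z with x ≤ z and y ≤ z satisfies x∨y ≤ z, where a ≤ b means a = a∧b = b∧a. (Consequently every distributive skew lattice has an underlying distributive band.) -/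
/-- The natural partial order of the meet-band of a skew lattice:
`a ≤ b` iff `a = a∧b = b∧a`. -/
def skewLe {S : Type*} (m : S → S → S) (a b : S) : Prop :=
  a = m a b ∧ a = m b a

/-!
The absorption laws translate `a ≤ b` into `a ∨ b = b = b ∨ a`. In this form, associativity of `∨`
shows that `x ∨ y` lies below every common upper bound of `x` and `y`. Symmetry supplies
`x ∨ y = y ∨ x`, which makes the absorption laws for `x` and `y` apply to `x ∨ y` on both sides, so
that it is itself an upper bound.
-/

/-- The four absorption laws of a skew lattice with meet `m` and join `j`, isolated from its
associativity and idempotence laws: they suffice to express the natural order through joins. -/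
structure SkewAbsorption {S : Type*} (m j : S → S → S) : Prop where
  meet_join_self : ∀ x y : S, j (m y x) x = x
  self_join_meet : ∀ x y : S, j x (m x y) = x
  self_meet_join : ∀ x y : S, m x (j x y) = x
  join_meet_self : ∀ x y : S, m (j y x) x = x

namespace SkewAbsorption

variable {S : Type*} {m j : S → S → S} {x y z : S}

theorem flip (h : SkewAbsorption m j) : SkewAbsorption (flip m) (flip j) where
  meet_join_self := h.self_join_meet
  self_join_meet := h.meet_join_self
  self_meet_join := h.join_meet_self
  join_meet_self := h.self_meet_join

theorem eq_meet_iff_join_eq (h : SkewAbsorption m j) : x = m x y ↔ j x y = y where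
  mp hxy := by simpa only [← hxy] using h.meet_join_self y x
  mpr hxy := by simpa only [hxy] using (h.self_meet_join x y).symm

theorem skewLe_iff_join_eq (h : SkewAbsorption m j) :
    skewLe m x y ↔ j x y = y ∧ j y x = y :=
  and_congr h.eq_meet_iff_join_eq h.flip.eq_meet_iff_join_eq

theorem skewLe_join_left (h : SkewAbsorption m j) (comm : j x y = j y x) :
    skewLe m x (j x y) :=
  ⟨(h.self_meet_join x y).symm, by rw [comm, h.join_meet_self]⟩

theorem skewLe_join_right (h : SkewAbsorption m j) (comm : j x y = j y x) :
    skewLe m y (j x y) :=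
  comm ▸ h.skewLe_join_left comm.symm

theorem join_skewLe (h : SkewAbsorption m j) (j_assoc : ∀ a b c : S, j (j a b) c = j a (j b c))
    (hxz : skewLe m x z) (hyz : skewLe m y z) : skewLe m (j x y) z := by
  obtain ⟨x_join_z, z_join_x⟩ := h.skewLe_iff_join_eq.mp hxz
  obtain ⟨y_join_z, z_join_y⟩ := h.skewLe_iff_join_eq.mp hyz
  refine h.skewLe_iff_join_eq.mpr ⟨?_, ?_⟩
  · rw [j_assoc, y_join_z, x_join_z]
  · rw [← j_assoc, z_join_x, z_join_y]

end SkewAbsorption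

theorem symmetric_skew_lattice_commuting_join_is_sup_general {S : Type*} {m j : S → S → S}
    (h : SkewAbsorption m j) (j_assoc : ∀ x y z : S, j (j x y) z = j x (j y z))
    {x y : S} (comm : j x y = j y x) :
    skewLe m x (j x y) ∧ skewLe m y (j x y) ∧
      ∀ z : S, skewLe m x z → skewLe m y z → skewLe m (j x y) z :=
  ⟨h.skewLe_join_left comm, h.skewLe_join_right comm, fun _ => h.join_skewLe j_assoc⟩

/-- In a symmetric skew lattice, if `x∧y = y∧x` then
`x∨y = y∨x` and `x∨y` is the least upper bound of `x` and `y` with respect to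
the natural partial order of the band `(S, ∧)`. -/
theorem symmetric_skew_lattice_commuting_join_is_sup {S : Type*} (m j : S → S → S)
    (m_assoc : ∀ x y z : S, m (m x y) z = m x (m y z))
    (j_assoc : ∀ x y z : S, j (j x y) z = j x (j y z))
    (m_idem : ∀ x : S, m x x = x) (j_idem : ∀ x : S, j x x = x)
    (abs₁ : ∀ x y : S, j (m y x) x = x)
    (abs₂ : ∀ x y : S, m x (j x y) = x)
    (abs₃ : ∀ x y : S, j x (m x y) = x)
    (abs₄ : ∀ x y : S, m (j y x) x = x)
    (symm : ∀ x y : S, m x y = m y x ↔ j x y = j y x) :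
    ∀ x y : S, m x y = m y x →
      j x y = j y x ∧
      skewLe m x (j x y) ∧ skewLe m y (j x y) ∧
      ∀ z : S, skewLe m x z → skewLe m y z → skewLe m (j x y) z :=
  fun x y hxy =>
    have comm : j x y = j y x := (symm x y).mp hxy
    ⟨comm, symmetric_skew_lattice_commuting_join_is_sup_general
      ⟨abs₁, abs₃, abs₂, abs₄⟩ j_assoc comm⟩
end

section
/- Let X be a spectral space and let C_1, …, C_n be pairwise disjoint constructible subsets of X whose union is X. Then there exists a finite ascending chain ∅ = U_0 ⊆ U_1 ⊆ … ⊆ U_m = X of compact open subsets of X such that for every j ∈ {1, …, m} the difference U_j \ U_{j-1} is contained in C_i for some i; that is, every constructible partition of X can be refined to a chain partition. -/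
/-- A subset of a topological space is constructible if it is a finite union of
differences `U \ V` with `U, V` compact open (this generates the Boolean
subalgebra of the powerset generated by the compact open subsets of a spectral
space). -/
def IsConstructibleSet {X : Type*} [TopologicalSpace X] (C : Set X) : Prop :=
  ∃ (n : ℕ) (U V : Fin n → Set X),
    (∀ i, IsCompact (U i) ∧ IsOpen (U i) ∧ IsCompact (V i) ∧ IsOpen (V i)) ∧
    C = ⋃ i, U i \ V i

/-!
Let `s` be a finite family of compact open sets. A step `a ⊆ b` of a chain of compact open sets is
refined by inserting `a ∪ (b ∩ w)`: the set `w` then contains the first difference and is disjoint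
from the second, and this stays true after any further refinement. Treating the members of `s` one
after the other, starting from the chain `∅ ⊆ X`, gives a chain each of whose differences is
contained in or disjoint from every member of `s`. If the constructible sets `C i` are Boolean
combinations of members of `s`, the same dichotomy holds for each `C i`, and as the `C i` cover `X`,
no nonempty difference can be disjoint from all of them.
-/

open TopologicalSpace Relation

/-- The element `w` decides the step from `a` to `b`. In a Boolean algebra this says that the
difference `b \ a` lies below `w` or is disjoint from `w`; avoiding complements lets the definition
apply to the lattice of compact open sets. -/
def Decides {L : Type*} [Lattice L] (w a b : L) : Prop :=
  b ≤ a ⊔ w ∨ b ⊓ w ≤ a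

namespace Decides

section Lattice

variable {L : Type*} [Lattice L] {w a b a' b' : L}

protected lemma refl (w a : L) : Decides w a a :=
  .inl le_sup_left

protected lemma mono (h : Decides w a b) (ha : a ≤ a') (hb : b' ≤ b) : Decides w a' b' :=
  h.imp (fun hle => hb.trans (hle.trans (sup_le_sup_right ha w)))
    fun hle => (inf_le_inf_right w hb).trans (hle.trans ha)

lemma self_sup_inf (w a b : L) : Decides w a (a ⊔ b ⊓ w) :=
  .inl (sup_le_sup_left inf_le_right a)

lemma sup_inf_self (w a b : L) : Decides w (a ⊔ b ⊓ w) b :=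
  .inr le_sup_right

end Lattice

protected lemma sdiff {α : Type*} [GeneralizedBooleanAlgebra α] {u v a b : α}
    (hu : Decides u a b) (hv : Decides v a b) : Decides (u \ v) a b := by
  rcases hu with hu | hu
  · rcases hv with hv | hv
    · right
      calc b ⊓ (u \ v) ≤ (a ⊔ v) \ v := by
            rw [← inf_sdiff_assoc]
            exact sdiff_le_sdiff_right (inf_le_left.trans hv)
        _ ≤ a := sup_sdiff_right_self.trans_le sdiff_le
    · left
      calc b = b ⊓ v ⊔ b \ v := (sup_inf_sdiff b v).symm
        _ ≤ a ⊔ (a ⊔ u) \ v := sup_le_sup hv (sdiff_le_sdiff_right hu)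
        _ = a ⊔ a \ v ⊔ u \ v := by rw [sup_sdiff, sup_assoc]
        _ = a ⊔ u \ v := by rw [sup_eq_left.2 sdiff_le]
  · exact .inr ((inf_le_inf_left b sdiff_le).trans hu)

section Frame

variable {α ι : Type*} [Order.Frame α] {f : ι → α} {a b : α}

protected lemma iSup (h : ∀ i, Decides (f i) a b) : Decides (⨆ i, f i) a b := by
  by_cases hle : ∃ i, b ≤ a ⊔ f i
  · obtain ⟨i, hi⟩ := hle
    exact .inl (hi.trans (sup_le_sup_left (le_iSup f i) a))
  · right
    rw [inf_iSup_eq]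
    exact iSup_le fun i => (h i).resolve_left fun hi => hle ⟨i, hi⟩

lemma exists_le_sup_of_le_iSup [Nonempty ι] (h : ∀ i, Decides (f i) a b) (hb : b ≤ ⨆ i, f i) :
    ∃ i, b ≤ a ⊔ f i := by
  by_contra! hnot
  have hba : b ≤ a := calc
    b = ⨆ i, b ⊓ f i := by rw [← inf_iSup_eq, inf_eq_left.2 hb]
    _ ≤ a := iSup_le fun i => (h i).resolve_left (hnot i)
  exact hnot (Classical.arbitrary ι) (hba.trans le_sup_left)

end Frame

end Decides

section Chains

lemma exists_seq_of_reflTransGen {α : Type*} {r : α → α → Prop} (hr : ∀ x, r x x) {a b : α}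
    (h : ReflTransGen r a b) :
    ∃ (m : ℕ) (u : ℕ → α), u 0 = a ∧ u m = b ∧ ∀ k, r (u k) (u (k + 1)) := by
  induction h using ReflTransGen.head_induction_on with
  | refl => exact ⟨0, fun _ => b, rfl, rfl, fun _ => hr b⟩
  | @head a c hac _ ih =>
    obtain ⟨m, u, rfl, rfl, hu⟩ := ih
    refine ⟨m + 1, fun k => k.casesOn a u, rfl, rfl, ?_⟩
    rintro (_ | k)
    · exact hac
    · exact hu k

variable {L : Type*} [Lattice L] {s : Set L} {a b : L}

lemma reflTransGen_le_and_decides (hs : s.Finite) (hab : a ≤ b) :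
    ReflTransGen (fun x y => x ≤ y ∧ ∀ w ∈ s, Decides w x y) a b := by
  induction s, hs using Set.Finite.induction_on with
  | empty => exact .single ⟨hab, by simp⟩
  | @insert w s _ _ ih =>
    refine reflTransGen_closed ?_ _ _ ih
    rintro x y ⟨hxy, hdec⟩
    have hx : x ≤ x ⊔ y ⊓ w := le_sup_left
    have hy : x ⊔ y ⊓ w ≤ y := sup_le hxy inf_le_left
    refine .tail (.single ⟨hx, ?_⟩) ⟨hy, ?_⟩ <;> rw [Set.forall_mem_insert]
    · exact ⟨.self_sup_inf w x y, fun v hv => (hdec v hv).mono le_rfl hy⟩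
    · exact ⟨.sup_inf_self w x y, fun v hv => (hdec v hv).mono hx le_rfl⟩

lemma exists_monotone_seq_decides (hs : s.Finite) (hab : a ≤ b) :
    ∃ (m : ℕ) (u : ℕ → L), u 0 = a ∧ u m = b ∧ Monotone u ∧
      ∀ k, ∀ w ∈ s, Decides w (u k) (u (k + 1)) := by
  obtain ⟨m, u, h0, hm, hu⟩ := exists_seq_of_reflTransGen
    (fun x => ⟨le_rfl, fun w _ => Decides.refl w x⟩) (reflTransGen_le_and_decides hs hab)
  exact ⟨m, u, h0, hm, monotone_nat_of_le_succ fun k => (hu k).1, fun k => (hu k).2⟩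

end Chains

section Constructible

variable {X : Type*} [TopologicalSpace X]

/-- The lattice of compact open sets of a quasi-separated space, combining the two semilattice
structures that Mathlib provides separately. -/
instance compactOpensLattice [QuasiSeparatedSpace X] : Lattice (CompactOpens X) where
  __ := (inferInstance : SemilatticeSup (CompactOpens X))
  __ := (inferInstance : SemilatticeInf (CompactOpens X))

lemma Decides.coe [QuasiSeparatedSpace X] {w a b : CompactOpens X} (h : Decides w a b) :
    Decides (w : Set X) a b :=
  h

lemma IsConstructibleSet.exists_finite_decides {C : Set X} (hC : IsConstructibleSet C) :
    ∃ s : Set (CompactOpens X), s.Finite ∧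
      ∀ A B : Set X, (∀ w ∈ s, Decides (w : Set X) A B) → Decides C A B := by
  obtain ⟨n, U, V, hUV, rfl⟩ := hC
  let U' (i : Fin n) : CompactOpens X := ⟨⟨U i, (hUV i).1⟩, (hUV i).2.1⟩
  let V' (i : Fin n) : CompactOpens X := ⟨⟨V i, (hUV i).2.2.1⟩, (hUV i).2.2.2⟩
  refine ⟨Set.range U' ∪ Set.range V', (Set.finite_range U').union (Set.finite_range V'),
    fun A B h => .iSup fun i => ?_⟩
  exact (h (U' i) (.inl ⟨i, rfl⟩)).sdiff (h (V' i) (.inr ⟨i, rfl⟩))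

theorem spectral_constructible_partition_chain_refinement_general [CompactSpace X]
    [QuasiSeparatedSpace X] {ι : Type*} [Finite ι] (C : ι → Set X)
    (hcons : ∀ i, IsConstructibleSet (C i)) (hcover : ⋃ i, C i = Set.univ) :
    ∃ (m : ℕ) (U : ℕ → CompactOpens X), U 0 = ⊥ ∧ U m = ⊤ ∧ Monotone U ∧
      ∀ k < m, ∃ i, (U (k + 1) : Set X) \ U k ⊆ C i := by
  rcases isEmpty_or_nonempty ι with _ | _
  · have : IsEmpty X := by
      rwa [Set.iUnion_of_empty, eq_comm, Set.univ_eq_empty_iff] at hcover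
    exact ⟨0, fun _ => ⊥, rfl, CompactOpens.ext (Subsingleton.elim _ _), monotone_const, by simp⟩
  choose s hs hdec using fun i => (hcons i).exists_finite_decides
  obtain ⟨m, U, h0, hm, hmono, hU⟩ :=
    exists_monotone_seq_decides (Set.finite_iUnion hs) (bot_le : (⊥ : CompactOpens X) ≤ ⊤)
  refine ⟨m, U, h0, hm, hmono, fun k _ => ?_⟩
  have hC (i : ι) : Decides (C i) (U k : Set X) (U (k + 1)) :=
    hdec i _ _ fun w hw => (hU k w (Set.mem_iUnion_of_mem i hw)).coe
  obtain ⟨i, hi⟩ := Decides.exists_le_sup_of_le_iSup hC (le_top.trans_eq hcover.symm)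
  exact ⟨i, sdiff_le_iff.2 hi⟩

end Constructible

/-- On a spectral space (compact, `T0`, sober, with the compact
open sets forming a basis closed under finite intersections), every finite
constructible partition can be refined to a chain partition: the family of
successive differences of an ascending chain `∅ = U_0 ⊆ ⋯ ⊆ U_m = X` of compact
open subsets. -/
theorem spectral_constructible_partition_chain_refinement
    {X : Type*} [TopologicalSpace X] [CompactSpace X] [T0Space X] [QuasiSober X]
    (basis : TopologicalSpace.IsTopologicalBasis {U : Set X | IsCompact U ∧ IsOpen U})
    (inter : ∀ U V : Set X,
      IsCompact U → IsOpen U → IsCompact V → IsOpen V → IsCompact (U ∩ V))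
    (n : ℕ) (C : Fin n → Set X)
    (hcons : ∀ i, IsConstructibleSet (C i))
    (hdisj : ∀ i j, i ≠ j → Disjoint (C i) (C j))
    (hcover : ⋃ i, C i = Set.univ) :
    ∃ (m : ℕ) (U : ℕ → Set X),
      U 0 = ∅ ∧ U m = Set.univ ∧
      (∀ k, IsCompact (U k) ∧ IsOpen (U k)) ∧
      (∀ k, U k ⊆ U (k + 1)) ∧
      (∀ k < m, ∃ i, U (k + 1) \ U k ⊆ C i) := by
  have : QuasiSeparatedSpace X := ⟨fun U V hUo hUc hVo hVc => inter U V hUc hUo hVc hVo⟩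
  obtain ⟨m, U, h0, hm, hmono, hC⟩ :=
    spectral_constructible_partition_chain_refinement_general C hcons hcover
  exact ⟨m, fun k => U k, by simp [h0], by simp [hm], fun k => ⟨(U k).isCompact, (U k).isOpen⟩,
    fun k => hmono k.le_succ, hC⟩
end

section
/- Let X be a Boolean space, i.e. a compact Hausdorff totally disconnected topological space, and let F be a sheaf of sets on X that is globally supported: every point of X has an open neighborhood U with F(U) nonempty (equivalently, every stalk of F is nonempty). Then F has a global section, i.e. F(X) is nonempty. -/
open CategoryTheory TopologicalSpace Opposite

/-!
Local sections rarely glue, because they need not agree on overlaps. On a Boolean space every open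
cover is refined by a finite partition into clopen sets; its overlaps are empty, and a sheaf has
exactly one section over the empty set, so any sections chosen on the pieces are compatible.
-/

lemma exists_finite_pairwise_disjoint_isOpenCover_refinement {X ι : Type*} [TopologicalSpace X]
    [CompactSpace X] [T2Space X] [TotallyDisconnectedSpace X]
    {U : ι → Opens X} (hU : IsOpenCover U) :
    ∃ (n : ℕ) (V : Fin n → Opens X),
      IsOpenCover V ∧ Pairwise (Function.onFun Disjoint V) ∧ ∀ j, ∃ i, V j ≤ U i := by
  obtain ⟨n, W, hWU, hcover, hdisj⟩ := hU.exists_finite_nonempty_disjoint_clopen_cover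
  exact ⟨n, fun j ↦ (W j).toOpens, .of_sets (fun j ↦ (W j).isOpen) (Set.univ_subset_iff.mp hcover),
    fun _ _ hij ↦ Opens.coe_disjoint.mp (Clopens.coe_disjoint.mpr (hdisj hij)),
    fun j ↦ (hWU j).2⟩

section DisjointGluing

variable {X : TopCat} (F : TopCat.Sheaf (Type*) X) {ι : Type*} {U : ι → Opens X}

lemma subsingleton_sections_of_eq_bot {V : Opens X} (hV : V = ⊥) :
    Subsingleton (F.obj.obj (op V)) :=
  (Limits.Types.isTerminalEquivUnique _ (F.isTerminalOfEqEmpty hV)).instSubsingleton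

lemma isCompatible_of_pairwise_disjoint (hU : Pairwise (Function.onFun Disjoint U))
    (s : ∀ i, F.obj.obj (op (U i))) : TopCat.Presheaf.IsCompatible F.obj U s := by
  intro i j
  obtain rfl | hij := eq_or_ne i j
  · rfl
  · have := subsingleton_sections_of_eq_bot F (hU hij).eq_bot
    exact Subsingleton.elim _ _

lemma existsUnique_isGluing_of_pairwise_disjoint (hU : Pairwise (Function.onFun Disjoint U))
    (s : ∀ i, F.obj.obj (op (U i))) :
    ∃! t : F.obj.obj (op (iSup U)), TopCat.Presheaf.IsGluing F.obj U s t :=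
  TopCat.Presheaf.IsSheaf.isSheafUniqueGluing_types F.property s
    (isCompatible_of_pairwise_disjoint F hU s)

lemma nonempty_sections_iSup_of_pairwise_disjoint (hU : Pairwise (Function.onFun Disjoint U))
    (hF : ∀ i, Nonempty (F.obj.obj (op (U i)))) : Nonempty (F.obj.obj (op (iSup U))) :=
  let ⟨t, _⟩ := existsUnique_isGluing_of_pairwise_disjoint F hU fun i ↦ (hF i).some
  ⟨t⟩

end DisjointGluing

/-- A globally supported sheaf of sets on a Boolean space
(compact Hausdorff totally disconnected space) has a global section: if every
point has an open neighbourhood over which the sheaf has a section, then the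
sheaf has a global section. -/
theorem boolean_space_globally_supported_sheaf_has_global_section
    (X : TopCat) [CompactSpace X] [T2Space X] [TotallyDisconnectedSpace X]
    (F : TopCat.Sheaf (Type*) X)
    (hsupp : ∀ x : X, ∃ U : Opens X, x ∈ U ∧ Nonempty (F.val.obj (op U))) :
    Nonempty (F.val.obj (op ⊤)) := by
  choose U hxU hFU using hsupp
  have hU : IsOpenCover U := top_le_iff.mp fun x _ ↦ Opens.mem_iSup.mpr ⟨x, hxU x⟩
  obtain ⟨n, V, hV, hdisj, hVU⟩ := exists_finite_pairwise_disjoint_isOpenCover_refinement hU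
  have hFV (j : Fin n) : Nonempty (F.obj.obj (op (V j))) :=
    let ⟨x, hjx⟩ := hVU j
    (hFU x).map (F.obj.map (homOfLE hjx).op)
  rw [← hV.iSup_eq_top]
  exact nonempty_sections_iSup_of_pairwise_disjoint F hdisj hFV
end
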